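/- Moyal's formula for the QP-WPT: let f, g ∈ L¹(ℝ) ∩ L²(ℝ), let ψ, φ ∈ L¹(ℝ) ∩ L²(ℝ), and fix α > 0. Denote by W^{μ,ψ}_f the QP-WPT of f with respect to the wavelet ψ and by W^{μ,φ}_g the QP-WPT of g with respect to the wavelet φ. Then ∫_ℝ ∫_ℝ W^{μ,ψ}_f(ξ, β, α) · conj(W^{μ,φ}_g(ξ, β, α)) dξ dβ = conj(⟨ψ, φ⟩_{L²(ℝ)}) · ⟨f, g⟩_{L²(ℝ)}, where ⟨u, v⟩_{L²(ℝ)} = ∫_ℝ u(t) conj(v(t)) dt. -/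

import Mathlib

open MeasureTheory Complex

/-- The constant √(b/(2πi)) = √(b/(2π))·e^{−iπ/4}. -/
noncomputable def qpConst (b : ℝ) : ℂ :=
  (Real.sqrt (b / (2 * Real.pi)) : ℂ) * Complex.exp (-((Real.pi / 4 : ℝ) : ℂ) * Complex.I)

/-- The dilation ψ_α(t) = α^{−1/2} ψ(t/α). -/
noncomputable def dil (ψ : ℝ → ℂ) (α : ℝ) (t : ℝ) : ℂ :=
  ((α ^ (-(1 / 2 : ℝ)) : ℝ) : ℂ) * ψ (t / α)

/-- The quadratic-phase Fourier transform. -/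
noncomputable def QPFT (a b c d e : ℝ) (f : ℝ → ℂ) (ξ : ℝ) : ℂ :=
  qpConst b * ∫ t : ℝ, f t *
    Complex.exp (Complex.I * ((a * t ^ 2 + b * t * ξ + c * ξ ^ 2 + d * t + e * ξ : ℝ) : ℂ))

/-- The quadratic-phase wave packet transform of `f` with respect to the wavelet `ψ`. -/
noncomputable def QPWPT (a b c d e : ℝ) (ψ f : ℝ → ℂ) (ξ β α : ℝ) : ℂ :=
  qpConst b * ∫ t : ℝ,
    Complex.exp (Complex.I * ((2 * a * t ^ 2 + b * t * ξ + c * ξ ^ 2 + 2 * d * t + e * ξ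
      - a * β ^ 2 - d * β : ℝ) : ℂ)) * f t * (starRingEnd ℂ) (dil ψ α (t - β))

/-- The analyzing packet ψ^μ_{ξ,β,α}. -/
noncomputable def qpwPacket (a b c d e : ℝ) (ψ : ℝ → ℂ) (ξ β α : ℝ) (t : ℝ) : ℂ :=
  (starRingEnd ℂ) (qpConst b) *
    Complex.exp (-Complex.I * ((2 * a * t ^ 2 + b * t * ξ + c * ξ ^ 2 + 2 * d * t + e * ξ
      - a * β ^ 2 - d * β : ℝ) : ℂ)) * dil ψ α (t - β)

/-! Up to unimodular factors (chirps), `W_f(·, β, α)` is the quadratic-phase Fourier transform of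
`f(t) conj ψ_α(t - β)`, and the latter transform is the rescaled Fourier transform of a chirped
function. Plancherel's theorem in `ξ` therefore turns the inner integral into
`∫ f(t) conj g(t) conj(ψ_α(t - β)) φ_α(t - β) dt`; integrating over `β` is a correlation, whose
integral is the product of the integrals, and dilation preserves `⟨ψ, φ⟩`. The windowed signal
`f(t) conj ψ_α(t - β)` is integrable for every `β`, but lies in `L²`, as Plancherel requires, only
for almost every `β`: this holds wherever the convolution of `|f|²` with the reflection of `|ψ_α|²`
converges. -/

open scoped FourierTransform SchwartzMap ComplexConjugate InnerProductSpace ENNReal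

section Plancherel

variable {E F : Type*} [NormedAddCommGroup E] [InnerProductSpace ℝ E] [FiniteDimensional ℝ E]
  [MeasurableSpace E] [BorelSpace E]
  [NormedAddCommGroup F] [InnerProductSpace ℂ F]

theorem continuous_fourier_of_integrable {f : E → F} (hf : Integrable f) : Continuous (𝓕 f) :=
  VectorFourier.fourierIntegral_continuous Real.continuous_fourierChar
    (innerSL ℝ).continuous₂ hf

variable [CompleteSpace F]

theorem integral_fourier_smul_of_integrable {g : E → ℂ} {f : E → F}
    (hg : Integrable g) (hf : Integrable f) :
    ∫ x, 𝓕 g x • f x = ∫ x, g x • 𝓕 f x := by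
  simpa only [flip_innerₗ] using!
    VectorFourier.integral_fourierIntegral_smul_eq_flip (L := innerₗ E)
      Real.continuous_fourierChar (innerSL ℝ).continuous₂ hg hf

/- Both sides are the Fourier transform of `f` as a tempered distribution. -/
theorem fourier_toLp_ae_eq {f : E → F} (hf1 : Integrable f) (hf2 : MemLp f 2) :
    (𝓕 (hf2.toLp f) : Lp F 2 (volume : Measure E)) =ᵐ[volume] 𝓕 f := by
  refine ae_eq_of_integral_contDiff_smul_eq ((Lp.memLp _).locallyIntegrable one_le_two)
    (continuous_fourier_of_integrable hf1).locallyIntegrable fun g hg hgs => ?_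
  have hgs' : HasCompactSupport fun x => (g x : ℂ) := hgs.comp_left ofReal_zero
  let G : 𝓢(E, ℂ) := hgs'.toSchwartzMap (ofRealCLM.contDiff.comp hg)
  calc ∫ x, g x • (𝓕 (hf2.toLp f) : Lp F 2 (volume : Measure E)) x
      = ((𝓕 (hf2.toLp f) : Lp F 2 (volume : Measure E)) : 𝓢'(E, F)) G := by
        rw [Lp.toTemperedDistribution_apply]
        rfl
    _ = ∫ x, (𝓕 G) x • hf2.toLp f x := by
        rw [← Lp.fourier_toTemperedDistribution_eq, TemperedDistribution.fourier_apply,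
          Lp.toTemperedDistribution_apply]
    _ = ∫ x, 𝓕 (G : E → ℂ) x • f x := by
        refine integral_congr_ae ?_
        filter_upwards [hf2.coeFn_toLp] with x hx
        rw [hx, SchwartzMap.fourier_coe]
    _ = ∫ x, G x • 𝓕 f x := integral_fourier_smul_of_integrable G.integrable hf1
    _ = ∫ x, g x • 𝓕 f x := rfl

theorem integral_inner_fourier_fourier {f g : E → F} (hf1 : Integrable f) (hf2 : MemLp f 2)
    (hg1 : Integrable g) (hg2 : MemLp g 2) :
    ∫ ξ, ⟪𝓕 f ξ, 𝓕 g ξ⟫_ℂ = ∫ x, ⟪f x, g x⟫_ℂ :=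
  calc ∫ ξ, ⟪𝓕 f ξ, 𝓕 g ξ⟫_ℂ = ⟪𝓕 (hf2.toLp f), 𝓕 (hg2.toLp g)⟫_ℂ := by
        rw [L2.inner_def]
        refine integral_congr_ae ?_
        filter_upwards [fourier_toLp_ae_eq hf1 hf2, fourier_toLp_ae_eq hg1 hg2] with ξ hfξ hgξ
        rw [hfξ, hgξ]
    _ = ⟪hf2.toLp f, hg2.toLp g⟫_ℂ := Lp.inner_fourier_eq _ _
    _ = ∫ x, ⟪f x, g x⟫_ℂ := by
        rw [L2.inner_def]
        refine integral_congr_ae ?_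
        filter_upwards [hf2.coeFn_toLp, hg2.coeFn_toLp] with x hfx hgx
        rw [hfx, hgx]

end Plancherel

section Correlation

variable {G E E' F : Type*} [AddGroup G] [MeasurableSpace G] [MeasurableAdd₂ G]
  [MeasurableNeg G] {μ ν : Measure G} [SFinite μ] [μ.IsAddRightInvariant] [μ.IsNegInvariant]
  [NormedAddCommGroup E] [NormedSpace ℝ E]
  [NormedAddCommGroup E'] [NormedSpace ℝ E']
  [NormedAddCommGroup F] [NormedSpace ℝ F]

theorem integral_integral_comp_sub [SFinite ν]
    [CompleteSpace E] [CompleteSpace E'] [CompleteSpace F]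
    (L : E →L[ℝ] E' →L[ℝ] F) {u : G → E} {v : G → E'}
    (hu : Integrable u ν) (hv : Integrable v μ) :
    ∫ x, ∫ t, L (u t) (v (t - x)) ∂ν ∂μ = L (∫ t, u t ∂ν) (∫ t, v t ∂μ) := by
  simpa [convolution, integral_neg_eq_self] using integral_convolution L hu hv.comp_neg

theorem ae_memLp_comp_sub (L : E →L[ℝ] E' →L[ℝ] F) {u : G → E} {v : G → E'} {p : ℝ≥0∞}
    (hp0 : p ≠ 0) (hp : p ≠ ⊤) (hu : MemLp u p μ) (hv : MemLp v p μ) :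
    ∀ᵐ x ∂μ, MemLp (fun t => L (u t) (v (t - x))) p μ := by
  have hpow := (hu.integrable_norm_rpow hp0 hp).ae_convolution_exists
    (ContinuousLinearMap.mul ℝ ℝ) (hv.integrable_norm_rpow hp0 hp).comp_neg
  filter_upwards [hpow] with x hx
  have hvx := hv.1.comp_measurePreserving (measurePreserving_sub_right μ x)
  have hnorm : MemLp (fun t => ‖u t‖ * ‖v (t - x)‖) p μ := by
    refine (integrable_norm_rpow_iff (hu.1.norm.mul hvx.norm) hp0 hp).1 ?_
    simpa [ConvolutionExistsAt, Real.mul_rpow] using hx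
  refine hnorm.of_le_mul (c := ‖L‖) (L.aestronglyMeasurable_comp₂ hu.1 hvx) (.of_forall fun t => ?_)
  simpa [mul_assoc] using L.le_opNorm₂ (u t) (v (t - x))

end Correlation

theorem memLp_comp_smul {E F : Type*} [NormedAddCommGroup E] [NormedSpace ℝ E]
    [FiniteDimensional ℝ E] [MeasurableSpace E] [BorelSpace E] {μ : Measure E}
    [μ.IsAddHaarMeasure] [NormedAddCommGroup F] {f : E → F} {p : ℝ≥0∞} (hf : MemLp f p μ)
    {r : ℝ} (hr : r ≠ 0) : MemLp (fun x => f (r • x)) p μ := by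
  refine MemLp.comp_of_map ?_ (measurable_const_smul r).aemeasurable
  rw [Measure.map_addHaar_smul μ hr]
  exact hf.smul_measure ENNReal.ofReal_ne_top

section Dilation

theorem memLp_dil {ψ : ℝ → ℂ} {p : ℝ≥0∞} (hψ : MemLp ψ p) {α : ℝ} (hα : α ≠ 0) :
    MemLp (dil ψ α) p := by
  simpa only [dil, smul_eq_mul, ← div_eq_inv_mul] using!
    (memLp_comp_smul hψ (inv_ne_zero hα)).const_mul ((α ^ (-(1 / 2 : ℝ)) : ℝ) : ℂ)

theorem dil_mul_conj_dil (ψ φ : ℝ → ℂ) {α : ℝ} (hα : 0 < α) (t : ℝ) :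
    dil ψ α t * conj (dil φ α t) = ((α⁻¹ : ℝ) : ℂ) * (ψ (t / α) * conj (φ (t / α))) := by
  have hsq : α⁻¹ = α ^ (-(1 / 2 : ℝ)) * α ^ (-(1 / 2 : ℝ)) := by
    rw [← Real.rpow_add hα, ← Real.rpow_neg_one]
    norm_num
  simp only [dil, hsq, map_mul, conj_ofReal, ofReal_mul]
  ring

theorem integral_dil_mul_conj_dil (ψ φ : ℝ → ℂ) {α : ℝ} (hα : 0 < α) :
    ∫ t, dil ψ α t * conj (dil φ α t) = ∫ t, ψ t * conj (φ t) := by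
  simp_rw [dil_mul_conj_dil ψ φ hα]
  rw [integral_const_mul, Measure.integral_comp_div (fun t => ψ t * conj (φ t)), abs_of_pos hα,
    real_smul, ← mul_assoc, ← ofReal_mul, inv_mul_cancel₀ hα.ne', ofReal_one, one_mul]

end Dilation

/-- The chirp `e^{i(at² + dt)}`, the unimodular factor relating quadratic-phase transforms to the
Fourier transform. -/
noncomputable def chirp (a d t : ℝ) : ℂ :=
  exp (I * ((a * t ^ 2 + d * t : ℝ) : ℂ))

namespace chirp

theorem norm_eq_one (a d t : ℝ) : ‖chirp a d t‖ = 1 :=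
  norm_exp_I_mul_ofReal _

theorem mul_conj_self (a d t : ℝ) : chirp a d t * conj (chirp a d t) = 1 := by
  simp [mul_conj', norm_eq_one]

theorem mul_mul_conj_mul (a d t : ℝ) (z w : ℂ) :
    chirp a d t * z * conj (chirp a d t * w) = z * conj w := by
  rw [map_mul, mul_mul_mul_comm, mul_conj_self, one_mul]

theorem conj_mul_mul_conj_conj_mul (a d t : ℝ) (z w : ℂ) :
    conj (chirp a d t) * z * conj (conj (chirp a d t) * w) = z * conj w := by
  rw [map_mul, conj_conj, mul_mul_mul_comm, mul_comm (conj _), mul_conj_self, one_mul]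

theorem continuous (a d : ℝ) : Continuous (chirp a d) := by
  unfold chirp
  fun_prop

theorem memLp_mul (a d : ℝ) {f : ℝ → ℂ} {p : ℝ≥0∞} {μ : Measure ℝ} (hf : MemLp f p μ) :
    MemLp (fun t => chirp a d t * f t) p μ :=
  hf.of_le ((continuous a d).aestronglyMeasurable.mul hf.1)
    (.of_forall fun t => by simp [norm_eq_one])

end chirp

section QuadraticPhaseFourier

theorem qpConst_mul_conj {b : ℝ} (hb : 0 ≤ b) :
    qpConst b * conj (qpConst b) = ((b / (2 * Real.pi) : ℝ) : ℂ) := by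
  have hnorm : ‖qpConst b‖ = √(b / (2 * Real.pi)) := by
    rw [qpConst, norm_mul, ← ofReal_neg, norm_exp_ofReal_mul_I, mul_one,
      Complex.norm_of_nonneg (Real.sqrt_nonneg _)]
  rw [mul_conj', hnorm, ← ofReal_pow, Real.sq_sqrt (by positivity)]

theorem QPFT_eq_chirp_mul_fourier (a b c d e : ℝ) (f : ℝ → ℂ) (ξ : ℝ) :
    QPFT a b c d e f ξ =
      qpConst b * (chirp c e ξ * 𝓕 (fun t => chirp a d t * f t) (-(b / (2 * Real.pi)) * ξ)) := by
  rw [QPFT, Real.fourier_real_eq_integral_exp_smul, ← integral_const_mul (chirp c e ξ)]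
  congr 2 with t
  have hphase : I * ((a * t ^ 2 + b * t * ξ + c * ξ ^ 2 + d * t + e * ξ : ℝ) : ℂ) =
      I * ((c * ξ ^ 2 + e * ξ : ℝ) : ℂ) +
        (((-2 * Real.pi * t * (-(b / (2 * Real.pi)) * ξ) : ℝ) : ℂ) * I +
          I * ((a * t ^ 2 + d * t : ℝ) : ℂ)) := by
    have hpi : -2 * Real.pi * t * (-(b / (2 * Real.pi)) * ξ) = b * t * ξ := by
      field_simp
    rw [hpi]
    push_cast
    ring
  rw [hphase, exp_add, exp_add, chirp, chirp, smul_eq_mul]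
  ring

theorem integral_QPFT_mul_conj (a c d e : ℝ) {b : ℝ} (hb : 0 < b) {f g : ℝ → ℂ}
    (hf1 : Integrable f) (hf2 : MemLp f 2) (hg1 : Integrable g) (hg2 : MemLp g 2) :
    ∫ ξ, QPFT a b c d e f ξ * conj (QPFT a b c d e g ξ) = ∫ t, f t * conj (g t) := by
  let F : ℝ → ℂ := 𝓕 fun t => chirp a d t * f t
  let G : ℝ → ℂ := 𝓕 fun t => chirp a d t * g t
  let κ : ℝ := b / (2 * Real.pi)
  have hκ : 0 < κ := by positivity
  have hL1 {u : ℝ → ℂ} (hu : Integrable u) : Integrable fun t => chirp a d t * u t :=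
    memLp_one_iff_integrable.1 (chirp.memLp_mul a d (memLp_one_iff_integrable.2 hu))
  have plancherel : ∫ η, F η * conj (G η) = ∫ t, f t * conj (g t) := by
    simpa only [RCLike.inner_apply, chirp.mul_mul_conj_mul] using
      integral_inner_fourier_fourier (hL1 hg1) (chirp.memLp_mul a d hg2)
        (hL1 hf1) (chirp.memLp_mul a d hf2)
  calc ∫ ξ, QPFT a b c d e f ξ * conj (QPFT a b c d e g ξ)
      = ∫ ξ, (κ : ℂ) * (F (-κ * ξ) * conj (G (-κ * ξ))) := by
        congr 1 with ξ
        rw [QPFT_eq_chirp_mul_fourier, QPFT_eq_chirp_mul_fourier, map_mul, mul_mul_mul_comm,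
          qpConst_mul_conj hb.le, chirp.mul_mul_conj_mul]
    _ = κ * (|(-κ)⁻¹| • ∫ η, F η * conj (G η)) := by
        rw [integral_const_mul, Measure.integral_comp_mul_left fun η => F η * conj (G η)]
    _ = ∫ t, f t * conj (g t) := by
        rw [plancherel, abs_inv, abs_neg, abs_of_pos hκ, real_smul, ← mul_assoc, ← ofReal_mul,
          mul_inv_cancel₀ hκ.ne', ofReal_one, one_mul]

end QuadraticPhaseFourier

/-- The signal `f` windowed by `w` centred at `β` and multiplied by a chirp. Up to a unimodular
factor its QPFT is the QP-WPT of `f` when `w` is a dilated wavelet. -/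
noncomputable def chirpedWindow (a d : ℝ) (w f : ℝ → ℂ) (β t : ℝ) : ℂ :=
  chirp a d t * (f t * conj (w (t - β)))

namespace chirpedWindow

theorem integrable (a d : ℝ) {w f : ℝ → ℂ} (hw : MemLp w 2) (hf : MemLp f 2) (β : ℝ) :
    Integrable (chirpedWindow a d w f β) := by
  have hwβ := (hw.comp_measurePreserving (measurePreserving_sub_right volume β)).star
  exact memLp_one_iff_integrable.1 (chirp.memLp_mul a d
    (memLp_one_iff_integrable.2 (hf.integrable_mul hwβ)))

theorem ae_memLp (a d : ℝ) {w f : ℝ → ℂ} {p : ℝ≥0∞} (hp0 : p ≠ 0) (hp : p ≠ ⊤)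
    (hw : MemLp w p) (hf : MemLp f p) : ∀ᵐ β, MemLp (chirpedWindow a d w f β) p := by
  filter_upwards [ae_memLp_comp_sub (ContinuousLinearMap.mul ℝ ℂ) hp0 hp hf hw.star] with β hβ
  exact chirp.memLp_mul a d hβ

theorem mul_conj (a d : ℝ) (w v f g : ℝ → ℂ) (β t : ℝ) :
    chirpedWindow a d w f β t * conj (chirpedWindow a d v g β t) =
      f t * conj (g t) * conj (w (t - β) * conj (v (t - β))) := by
  rw [chirpedWindow, chirpedWindow, chirp.mul_mul_conj_mul, map_mul, map_mul, mul_mul_mul_comm]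

end chirpedWindow

section WavePacket

theorem QPWPT_eq_conj_chirp_mul_QPFT (a b c d e : ℝ) (ψ f : ℝ → ℂ) (ξ β α : ℝ) :
    QPWPT a b c d e ψ f ξ β α =
      conj (chirp a d β) * QPFT a b c d e (chirpedWindow a d (dil ψ α) f β) ξ := by
  rw [QPWPT, QPFT, mul_left_comm, ← integral_const_mul (conj _)]
  congr 2 with t
  have hphase : I * ((2 * a * t ^ 2 + b * t * ξ + c * ξ ^ 2 + 2 * d * t + e * ξ
        - a * β ^ 2 - d * β : ℝ) : ℂ) =
      conj (I * ((a * β ^ 2 + d * β : ℝ) : ℂ)) + I * ((a * t ^ 2 + d * t : ℝ) : ℂ) +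
        I * ((a * t ^ 2 + b * t * ξ + c * ξ ^ 2 + d * t + e * ξ : ℝ) : ℂ) := by
    rw [map_mul, conj_I, conj_ofReal]
    push_cast
    ring
  rw [hphase, exp_add, exp_add, exp_conj, chirpedWindow, chirp, chirp]
  ring

theorem ae_integral_QPWPT_mul_conj (a c d e : ℝ) {b : ℝ} (hb : 0 < b) {f g ψ φ : ℝ → ℂ}
    (hf : MemLp f 2) (hg : MemLp g 2) (hψ : MemLp ψ 2) (hφ : MemLp φ 2) {α : ℝ} (hα : α ≠ 0) :
    ∀ᵐ β : ℝ, ∫ ξ, QPWPT a b c d e ψ f ξ β α * conj (QPWPT a b c d e φ g ξ β α) =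
      ∫ t, f t * conj (g t) * conj (dil ψ α (t - β) * conj (dil φ α (t - β))) := by
  have hψα := memLp_dil hψ hα
  have hφα := memLp_dil hφ hα
  filter_upwards [chirpedWindow.ae_memLp a d two_ne_zero ENNReal.ofNat_ne_top hψα hf,
    chirpedWindow.ae_memLp a d two_ne_zero ENNReal.ofNat_ne_top hφα hg] with β hfβ hgβ
  simp_rw [QPWPT_eq_conj_chirp_mul_QPFT, chirp.conj_mul_mul_conj_conj_mul]
  rw [integral_QPFT_mul_conj a c d e hb (chirpedWindow.integrable a d hψα hf β) hfβ
    (chirpedWindow.integrable a d hφα hg β) hgβ]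
  simp_rw [chirpedWindow.mul_conj]

theorem qpwpt_moyal_general (a c d e : ℝ) {b : ℝ} (hb : 0 < b) {f g ψ φ : ℝ → ℂ}
    (hf : MemLp f 2) (hg : MemLp g 2) (hψ : MemLp ψ 2) (hφ : MemLp φ 2) {α : ℝ} (hα : 0 < α) :
    ∫ β, ∫ ξ, QPWPT a b c d e ψ f ξ β α * conj (QPWPT a b c d e φ g ξ β α) =
      conj (∫ t, ψ t * conj (φ t)) * ∫ t, f t * conj (g t) := by
  let w : ℝ → ℂ := fun t => conj (dil ψ α t * conj (dil φ α t))
  have hfg : Integrable fun t => f t * conj (g t) := hf.integrable_mul hg.star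
  have hw : Integrable w := by
    simpa [w] using! (memLp_dil hψ hα.ne').star.integrable_mul (memLp_dil hφ hα.ne')
  calc ∫ β, ∫ ξ, QPWPT a b c d e ψ f ξ β α * conj (QPWPT a b c d e φ g ξ β α)
      = ∫ β, ∫ t, f t * conj (g t) * w (t - β) :=
        integral_congr_ae (ae_integral_QPWPT_mul_conj a c d e hb hf hg hψ hφ hα.ne')
    _ = (∫ t, f t * conj (g t)) * ∫ t, w t :=
        integral_integral_comp_sub (ContinuousLinearMap.mul ℝ ℂ) hfg hw
    _ = conj (∫ t, ψ t * conj (φ t)) * ∫ t, f t * conj (g t) := by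
        rw [integral_conj, integral_dil_mul_conj_dil ψ φ hα, mul_comm]

end WavePacket

theorem qpwpt_moyal (a b c d e : ℝ) (hb : 0 < b) (f g ψ φ : ℝ → ℂ)
    (hf1 : Integrable f volume) (hf2 : MemLp f 2 volume)
    (hg1 : Integrable g volume) (hg2 : MemLp g 2 volume)
    (hψ1 : Integrable ψ volume) (hψ2 : MemLp ψ 2 volume)
    (hφ1 : Integrable φ volume) (hφ2 : MemLp φ 2 volume)
    (α : ℝ) (hα : 0 < α) :
    ∫ β : ℝ, ∫ ξ : ℝ,
        QPWPT a b c d e ψ f ξ β α * (starRingEnd ℂ) (QPWPT a b c d e φ g ξ β α)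
      = (starRingEnd ℂ) (∫ t : ℝ, ψ t * (starRingEnd ℂ) (φ t)) *
        ∫ t : ℝ, f t * (starRingEnd ℂ) (g t) :=
  qpwpt_moyal_general a c d e hb hf2 hg2 hψ2 hφ2 hα
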